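/- In every drawing of the complete bipartite graph K_{3,7} in the plane, the number of unordered pairs of distinct edges that cross each other is strictly greater than 6 (i.e., cr(K_{3,7}) > 6). -/

import Mathlib

/-!
The bound follows from a parity theorem for `K_{3,3}`: in every drawing of `K_{3,3}`, even with
edges that are only continuous curves, some two edges without a common vertex meet
(`exists_disjoint_edges_meet`). Each of the `35` triples of vertices on the side of size `7`
spans a copy of `K_{3,3}` with the other side, hence yields a crossing pair of edges whose ends
in the triple are distinct. Such a pair is counted by at most `5` triples, so there are at
least `35 / 5 = 7` crossing pairs.

The parity theorem is an elementary form of the van Kampen obstruction. If the curves `f` and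
`h` are disjoint, then `(s, t) ↦ f s - h t` is a nonvanishing map on a simply connected space,
so it has a continuous logarithm; comparing the two ways around the boundary of the unit square
gives a relation between the variations of `log` of `f - h 0`, `f - h 1`, `h - f 0`, `h - f 1`
(`logVar_square`). Each such variation is, up to an integer multiple of `2πi`, a difference of
fixed logarithms of the differences of the vertices. Substituting, each of the `18` pairs of
disjoint edges of `K_{3,3}` gives an equation between these integers. In the sum of the
equations every integer occurs with coefficient `± 2`, whereas the constant terms, which record
the crossings of a reference drawing, add up to the odd number `9`.
-/

open Set

/-- A drawing of a simple graph `G` in the plane: an injective placement of vertices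
together with, for each edge, a continuous injective curve between the points of its
endpoints, whose interior avoids all vertex points; any two distinct edge curves meet in
finitely many points, and no point lies in the interiors of three distinct edge curves. -/
structure Drawing {V : Type*} (G : SimpleGraph V) where
  pos : V → ℝ × ℝ
  pos_inj : Function.Injective pos
  curve : G.edgeSet → ℝ → ℝ × ℝ
  curve_cont : ∀ e, ContinuousOn (curve e) (Icc 0 1)
  curve_inj : ∀ e, InjOn (curve e) (Icc 0 1)
  curve_ends : ∀ e : G.edgeSet, ∃ a b : V, (e : Sym2 V) = s(a, b) ∧
      curve e 0 = pos a ∧ curve e 1 = pos b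
  interior_no_vertex : ∀ e, ∀ t ∈ Ioo (0 : ℝ) 1, ∀ v, curve e t ≠ pos v
  finite_meet : ∀ e f, e ≠ f → (curve e '' Icc 0 1 ∩ curve f '' Icc 0 1).Finite
  no_triple_point : ∀ p : ℝ × ℝ, ∀ e f g, e ≠ f → e ≠ g → f ≠ g →
      p ∈ curve e '' Ioo 0 1 → p ∈ curve f '' Ioo 0 1 → p ∈ curve g '' Ioo 0 1 → False

/-- Two edges cross in a drawing if some point lies in the interiors of both curves. -/
def Drawing.Crosses {V : Type*} {G : SimpleGraph V} (D : Drawing G) (e f : G.edgeSet) : Prop :=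
  e ≠ f ∧ ∃ p : ℝ × ℝ, p ∈ D.curve e '' Ioo 0 1 ∧ p ∈ D.curve f '' Ioo 0 1

/-- A drawing is almost planar (1-planar) if every edge crosses at most one other edge. -/
def Drawing.IsAlmostPlanar {V : Type*} {G : SimpleGraph V} (D : Drawing G) : Prop :=
  ∀ e f g, D.Crosses e f → D.Crosses e g → f = g

/-- A graph is almost planar if it admits a drawing in which every edge crosses at most
one other edge. -/
def SimpleGraph.AlmostPlanar {V : Type*} (G : SimpleGraph V) : Prop :=
  ∃ D : Drawing G, D.IsAlmostPlanar

/-! ### Variation of the logarithm along a curve -/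

open Classical in
/-- The variation `F 1 - F 0` of a continuous logarithm `F` of `g` (zero if there is none).
It does not depend on the choice of `F`, see `logVar_eq`. -/
noncomputable def logVar (g : ℝ → ℂ) : ℂ :=
  if h : ∃ F : ℝ → ℂ, Continuous F ∧ ∀ t, Complex.exp (F t) = g t then
    h.choose 1 - h.choose 0 else 0

theorem logVar_unique {F G : ℝ → ℂ} (hF : Continuous F) (hG : Continuous G)
    (h : ∀ t, Complex.exp (F t) = Complex.exp (G t)) : F 1 - F 0 = G 1 - G 0 := by
  choose n hn using fun t => Complex.exp_eq_exp_iff_exists_int.1 (h t)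
  have hpi : (2 * Real.pi * Complex.I : ℂ) ≠ 0 := Complex.two_pi_I_ne_zero
  have hc : Continuous fun t => ((n t : ℤ) : ℂ) := by
    have : (fun t => ((n t : ℤ) : ℂ)) = fun t => (F t - G t) / (2 * Real.pi * Complex.I) := by
      funext t
      rw [hn t]
      field_simp
      ring
    rw [this]
    fun_prop
  -- an integer-valued continuous function on the line is constant
  have hn' : Continuous n := Complex.isClosedEmbedding_intCast.isEmbedding.continuous_iff.2 hc
  have h01 : n 1 = n 0 := PreconnectedSpace.constant inferInstance hn'
  rw [hn 1, hn 0, h01]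
  ring

theorem logVar_eq {g F : ℝ → ℂ} (hF : Continuous F) (h : ∀ t, Complex.exp (F t) = g t) :
    logVar g = F 1 - F 0 := by
  have hex : ∃ F : ℝ → ℂ, Continuous F ∧ ∀ t, Complex.exp (F t) = g t := ⟨F, hF, h⟩
  rw [logVar, dif_pos hex]
  exact logVar_unique hex.choose_spec.1 hF fun t => by rw [hex.choose_spec.2 t, h t]

theorem logVar_neg_eq {g F : ℝ → ℂ} (hF : Continuous F) (h : ∀ t, Complex.exp (F t) = - g t) :
    logVar g = F 1 - F 0 := by
  rw [logVar_eq (F := fun t => F t + Real.pi * Complex.I) (by fun_prop)]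
  · ring
  · intro t
    rw [Complex.exp_add, Complex.exp_pi_mul_I, h t]
    ring

theorem exists_log_lift {X : Type*} [TopologicalSpace X] [SimplyConnectedSpace X]
    [LocallyPathConnectedSpace X] {g : X → ℂ} (hg : Continuous g) (h0 : ∀ x, g x ≠ 0) :
    ∃ F : X → ℂ, Continuous F ∧ ∀ x, Complex.exp (F x) = g x := by
  obtain ⟨x₀⟩ : Nonempty X := inferInstance
  obtain ⟨F, ⟨-, hF⟩, -⟩ := Complex.isCoveringMapOn_exp.existsUnique_continuousMap_lifts
    ⟨g, hg⟩ (Complex.exp_log (h0 x₀)) (fun x => h0 x)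
  exact ⟨F, F.continuous, fun x => congrFun hF x⟩

theorem exp_logVar {g : ℝ → ℂ} (hg : Continuous g) (h0 : ∀ t, g t ≠ 0) :
    Complex.exp (logVar g) = g 1 / g 0 := by
  obtain ⟨F, hF, h⟩ := exists_log_lift hg h0
  rw [logVar_eq hF h, Complex.exp_sub, h, h]

/-- The variation of `log (f s - h t)` around the boundary of the unit square vanishes. -/
theorem logVar_square {f h : ℝ → ℂ} (hf : Continuous f) (hh : Continuous h)
    (hne : ∀ s t, f s ≠ h t) :
    logVar (fun s => f s - h 0) + logVar (fun t => h t - f 1) =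
      logVar (fun t => h t - f 0) + logVar (fun s => f s - h 1) := by
  obtain ⟨G, hG, hexp⟩ := exists_log_lift (X := ℝ × ℝ) (g := fun x => f x.1 - h x.2)
    (by fun_prop) (fun x => sub_ne_zero.2 (hne _ _))
  rw [logVar_eq (F := fun s => G (s, 0)) (by fun_prop) (fun s => hexp _),
    logVar_eq (F := fun s => G (s, 1)) (by fun_prop) (fun s => hexp _),
    logVar_neg_eq (F := fun t => G (1, t)) (by fun_prop)
      (fun t => by rw [hexp (1, t)]; ring),
    logVar_neg_eq (F := fun t => G (0, t)) (by fun_prop)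
      (fun t => by rw [hexp (0, t)]; ring)]
  ring

/-! ### The parity theorem for `K_{3,3}` -/

/-- A logarithm of `p y - p x` for `x ≠ y`, normalised so that exchanging `x < y` adds `πi`. -/
noncomputable def edgeLog (p : Fin 3 → ℂ) (x y : Fin 3) : ℂ :=
  if x < y then Complex.log (p y - p x) else Complex.log (p x - p y) + Real.pi * Complex.I

theorem exp_edgeLog {p : Fin 3 → ℂ} {x y : Fin 3} (h : p x ≠ p y) :
    Complex.exp (edgeLog p x y) = p y - p x := by
  unfold edgeLog
  split_ifs
  · rw [Complex.exp_log (sub_ne_zero.2 h.symm)]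
  · rw [Complex.exp_add, Complex.exp_log (sub_ne_zero.2 h), Complex.exp_pi_mul_I]
    ring

theorem edgeLog_swap (p : Fin 3 → ℂ) {x y : Fin 3} (h : x < y) :
    edgeLog p y x = edgeLog p x y + Real.pi * Complex.I := by
  simp [edgeLog, h, h.not_gt]

theorem exists_disjoint_edges_meet (p q : Fin 3 → ℂ) (γ : Fin 3 → Fin 3 → ℝ → ℂ)
    (hp : Function.Injective p) (hq : Function.Injective q)
    (hc : ∀ i j, Continuous (γ i j)) (h0 : ∀ i j, γ i j 0 = p i) (h1 : ∀ i j, γ i j 1 = q j) :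
    ∃ i i' j j', i ≠ i' ∧ j ≠ j' ∧ ∃ s t, γ i j s = γ i' j' t := by
  by_contra! hne
  have other : ∀ j : Fin 3, ∃ j', j ≠ j' := by decide
  have hnep : ∀ i i' j s, i ≠ i' → γ i j s ≠ p i' := by
    intro i i' j s hi
    obtain ⟨j', hj⟩ := other j
    rw [← h0 i' j']
    exact hne _ _ _ _ hi hj _ _
  have hneq : ∀ i j j' s, j ≠ j' → γ i j s ≠ q j' := by
    intro i j j' s hj
    obtain ⟨i', hi⟩ := other i
    rw [← h1 i' j']
    exact hne _ _ _ _ hi hj _ _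
  have hpq : ∀ i j, q j ≠ p i := by
    intro i j
    obtain ⟨i', hi⟩ := other i
    rw [← h1 i' j]
    exact hnep _ _ _ _ hi.symm
  have hP : ∀ x i j, ∃ n : ℤ, i ≠ x → logVar (fun s => γ i j s - p x) =
      Complex.log (q j - p x) - edgeLog p x i + n * (2 * Real.pi * Complex.I) := by
    intro x i j
    by_cases hx : i = x
    · exact ⟨0, fun h => absurd hx h⟩
    have : Complex.exp (logVar (fun s => γ i j s - p x)) =
        Complex.exp (Complex.log (q j - p x) - edgeLog p x i) := by
      rw [exp_logVar (by have := hc i j; fun_prop) (fun t => sub_ne_zero.2 (hnep _ _ _ _ hx)),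
        Complex.exp_sub, Complex.exp_log (sub_ne_zero.2 (hpq _ _)),
        exp_edgeLog (hp.ne (Ne.symm hx)), h0, h1]
    obtain ⟨n, hn⟩ := Complex.exp_eq_exp_iff_exists_int.1 this
    exact ⟨n, fun _ => hn⟩
  have hQ : ∀ y i j, ∃ n : ℤ, j ≠ y → logVar (fun s => γ i j s - q y) =
      edgeLog q y j - (Complex.log (q y - p i) + Real.pi * Complex.I)
        + n * (2 * Real.pi * Complex.I) := by
    intro y i j
    by_cases hy : j = y
    · exact ⟨0, fun h => absurd hy h⟩
    have : Complex.exp (logVar (fun s => γ i j s - q y)) =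
        Complex.exp (edgeLog q y j - (Complex.log (q y - p i) + Real.pi * Complex.I)) := by
      rw [exp_logVar (by have := hc i j; fun_prop) (fun t => sub_ne_zero.2 (hneq _ _ _ _ hy)),
        Complex.exp_sub, Complex.exp_add, Complex.exp_log (sub_ne_zero.2 (hpq _ _)),
        exp_edgeLog (hq.ne (Ne.symm hy)), h0, h1, Complex.exp_pi_mul_I]
      congr 1
      ring
    obtain ⟨n, hn⟩ := Complex.exp_eq_exp_iff_exists_int.1 this
    exact ⟨n, fun _ => hn⟩
  choose n hn using hP
  choose m hm using hQ
  have hrel : ∀ i i' j j', i < i' → j ≠ j' →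
      n i i' j' - n i' i j + m j' i j - m j i' j' = if j < j' then -1 else 0 := by
    intro i i' j j' hi hj
    have key := logVar_square (hc i j) (hc i' j') (hne i i' j j' hi.ne hj)
    rw [h0, h0, h1, h1, hn _ _ _ hi.ne, hn _ _ _ hi.ne', hm _ _ _ hj, hm _ _ _ hj.symm,
      edgeLog_swap p hi] at key
    have hpi : (2 * Real.pi * Complex.I : ℂ) ≠ 0 := Complex.two_pi_I_ne_zero
    split_ifs with hlt
    · rw [edgeLog_swap q hlt] at key
      have : ((n i i' j' - n i' i j + m j' i j - m j i' j' : ℤ) : ℂ) = ((-1 : ℤ) : ℂ) := by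
        apply mul_right_cancel₀ hpi
        push_cast
        linear_combination -key
      exact_mod_cast this
    · rw [edgeLog_swap q (lt_of_le_of_ne (not_lt.1 hlt) hj.symm)] at key
      have : ((n i i' j' - n i' i j + m j' i j - m j i' j' : ℤ) : ℂ) = ((0 : ℤ) : ℂ) := by
        apply mul_right_cancel₀ hpi
        push_cast
        linear_combination -key
      exact_mod_cast this
  have r := fun i i' hi j j' hj => hrel i i' j j' hi hj
  have e1 := r 0 1 (by decide)
  have e2 := r 0 2 (by decide)
  have e3 := r 1 2 (by decide)
  have a1 := e1 0 1 (by decide)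
  have a2 := e1 1 0 (by decide)
  have a3 := e1 0 2 (by decide)
  have a4 := e1 2 0 (by decide)
  have a5 := e1 1 2 (by decide)
  have a6 := e1 2 1 (by decide)
  have b1 := e2 0 1 (by decide)
  have b2 := e2 1 0 (by decide)
  have b3 := e2 0 2 (by decide)
  have b4 := e2 2 0 (by decide)
  have b5 := e2 1 2 (by decide)
  have b6 := e2 2 1 (by decide)
  have c1 := e3 0 1 (by decide)
  have c2 := e3 1 0 (by decide)
  have c3 := e3 0 2 (by decide)
  have c4 := e3 2 0 (by decide)
  have c5 := e3 1 2 (by decide)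
  have c6 := e3 2 1 (by decide)
  simp only [show (0 : Fin 3) < 1 by decide, show (0 : Fin 3) < 2 by decide,
    show (1 : Fin 3) < 2 by decide, show ¬ (1 : Fin 3) < 0 by decide,
    show ¬ (2 : Fin 3) < 0 by decide, show ¬ (2 : Fin 3) < 1 by decide, if_true, if_false]
    at a1 a2 a3 a4 a5 a6 b1 b2 b3 b4 b5 b6 c1 c2 c3 c4 c5 c6
  -- the sum of the 18 equations has an even left-hand side and right-hand side `-9`
  omega

/-! ### Drawings of `K_{3,7}` -/

/-- The edge of `K_{3,7}` joining the `i`-th vertex on the left and the `j`-th on the right. -/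
def edge37 (i : Fin 3) (j : Fin 7) : (completeBipartiteGraph (Fin 3) (Fin 7)).edgeSet :=
  ⟨s(Sum.inl i, Sum.inr j), by simp⟩

theorem exists_eq_edge37 (e : (completeBipartiteGraph (Fin 3) (Fin 7)).edgeSet) :
    ∃ i j, e = edge37 i j := by
  obtain ⟨e, he⟩ := e
  induction e with
  | _ a b =>
    rcases a with a | a <;> rcases b with b | b <;> simp at he
    · exact ⟨a, b, rfl⟩
    · exact ⟨b, a, Subtype.ext Sym2.eq_swap⟩

theorem edge37_inj {i i' : Fin 3} {j j' : Fin 7} (h : edge37 i j = edge37 i' j') :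
    i = i' ∧ j = j' := by
  simpa [edge37] using h

/-- An edge curve, oriented from left to right, extended to a continuous curve on `ℝ`
and transported to `ℂ`. -/
theorem exists_curve37 (D : Drawing (completeBipartiteGraph (Fin 3) (Fin 7)))
    (i : Fin 3) (j : Fin 7) :
    ∃ γ : ℝ → ℂ, Continuous γ ∧
      γ 0 = Complex.equivRealProd.symm (D.pos (Sum.inl i)) ∧
      γ 1 = Complex.equivRealProd.symm (D.pos (Sum.inr j)) ∧
      ∀ t, ∃ s ∈ Icc (0 : ℝ) 1, γ t = Complex.equivRealProd.symm (D.curve (edge37 i j) s) := by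
  have hφ : Continuous Complex.equivRealProd.symm :=
    Complex.equivRealProdCLM.symm.continuous
  have hcont : Continuous fun t : ℝ =>
      D.curve (edge37 i j) (projIcc (0 : ℝ) 1 zero_le_one t) :=
    (D.curve_cont (edge37 i j)).comp_continuous
      (continuous_subtype_val.comp continuous_projIcc) fun t => (projIcc _ _ _ t).2
  obtain ⟨a, b, hab, ha, hb⟩ := D.curve_ends (edge37 i j)
  rcases Sym2.eq_iff.1 hab with ⟨rfl, rfl⟩ | ⟨rfl, rfl⟩
  · refine ⟨fun t => Complex.equivRealProd.symm
      (D.curve (edge37 i j) (projIcc (0 : ℝ) 1 zero_le_one t)), hφ.comp hcont, ?_, ?_,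
      fun t => ⟨_, (projIcc (0 : ℝ) 1 zero_le_one t).2, rfl⟩⟩
    · simp [← ha]
    · simp [← hb]
  · refine ⟨fun t => Complex.equivRealProd.symm
      (D.curve (edge37 i j) (projIcc (0 : ℝ) 1 zero_le_one (1 - t))),
      hφ.comp (hcont.comp (by fun_prop : Continuous fun t : ℝ => 1 - t)), ?_, ?_,
      fun t => ⟨_, (projIcc (0 : ℝ) 1 zero_le_one (1 - t)).2, rfl⟩⟩
    · simp [← hb]
    · simp [← ha]

theorem crosses_of_meet (D : Drawing (completeBipartiteGraph (Fin 3) (Fin 7)))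
    {i i' : Fin 3} {j j' : Fin 7} (hi : i ≠ i') (hj : j ≠ j') {s t : ℝ}
    (hs : s ∈ Icc (0 : ℝ) 1) (ht : t ∈ Icc (0 : ℝ) 1)
    (h : D.curve (edge37 i j) s = D.curve (edge37 i' j') t) :
    D.Crosses (edge37 i j) (edge37 i' j') := by
  have hends : ∀ (i : Fin 3) (j : Fin 7) (s : ℝ), s ∈ Icc (0 : ℝ) 1 → s ∉ Ioo (0 : ℝ) 1 →
      D.curve (edge37 i j) s = D.pos (Sum.inl i) ∨
        D.curve (edge37 i j) s = D.pos (Sum.inr j) := by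
    intro i j s hs hs'
    obtain ⟨a, b, hab, ha, hb⟩ := D.curve_ends (edge37 i j)
    have h01 : s = 0 ∨ s = 1 := by
      by_contra! hcon
      exact hs' ⟨lt_of_le_of_ne hs.1 hcon.1.symm, lt_of_le_of_ne hs.2 hcon.2⟩
    rcases Sym2.eq_iff.1 hab with ⟨rfl, rfl⟩ | ⟨rfl, rfl⟩ <;> rcases h01 with rfl | rfl <;> tauto
  have hs' : s ∈ Ioo (0 : ℝ) 1 := by
    by_contra hs'
    by_cases ht' : t ∈ Ioo (0 : ℝ) 1
    · rcases hends i j s hs hs' with h1 | h1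
      · exact D.interior_no_vertex _ t ht' _ (h.symm.trans h1)
      · exact D.interior_no_vertex _ t ht' _ (h.symm.trans h1)
    · rcases hends i j s hs hs' with h1 | h1 <;> rcases hends i' j' t ht ht' with h2 | h2 <;>
        have h3 := D.pos_inj (h1.symm.trans (h.trans h2)) <;> simp_all
  have ht' : t ∈ Ioo (0 : ℝ) 1 := by
    by_contra ht'
    rcases hends i' j' t ht ht' with h1 | h1
    · exact D.interior_no_vertex _ s hs' _ (h.trans h1)
    · exact D.interior_no_vertex _ s hs' _ (h.trans h1)
  exact ⟨fun he => hi (edge37_inj he).1, _, ⟨s, hs', rfl⟩, ⟨t, ht', h.symm⟩⟩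

/-- Every triple of right vertices contains the two distinct right ends of a crossing pair. -/
theorem exists_crosses_of_triple (D : Drawing (completeBipartiteGraph (Fin 3) (Fin 7)))
    (T : Finset (Fin 7)) (hT : T.card = 3) :
    ∃ i i' j j', j ∈ T ∧ j' ∈ T ∧ j ≠ j' ∧ D.Crosses (edge37 i j) (edge37 i' j') := by
  choose γ hc h0 h1 hγ using exists_curve37 D
  let σ : Fin 3 → Fin 7 := T.orderEmbOfFin hT
  have hσ : Function.Injective σ := (T.orderEmbOfFin hT).injective
  obtain ⟨i, i', k, k', hi, hk, s, t, hst⟩ := exists_disjoint_edges_meet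
    (fun i => Complex.equivRealProd.symm (D.pos (Sum.inl i)))
    (fun k => Complex.equivRealProd.symm (D.pos (Sum.inr (σ k))))
    (fun i k => γ i (σ k))
    (Complex.equivRealProd.symm.injective.comp (D.pos_inj.comp Sum.inl_injective))
    (Complex.equivRealProd.symm.injective.comp
      (D.pos_inj.comp (Sum.inr_injective.comp hσ)))
    (fun _ _ => hc _ _) (fun _ _ => h0 _ _) (fun _ _ => h1 _ _)
  obtain ⟨s', hs', hs⟩ := hγ i (σ k) s
  obtain ⟨t', ht', ht⟩ := hγ i' (σ k') t
  refine ⟨i, i', σ k, σ k', T.orderEmbOfFin_mem hT k, T.orderEmbOfFin_mem hT k', hσ.ne hk,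
    crosses_of_meet D hi (hσ.ne hk) hs' ht' ?_⟩
  exact Complex.equivRealProd.symm.injective (by rw [← hs, ← ht]; exact hst)

theorem card_triples_containing_le : ∀ j j' : Fin 7, j ≠ j' →
    ((Finset.powersetCard 3 (Finset.univ : Finset (Fin 7))).filter
      fun T => j ∈ T ∧ j' ∈ T).card ≤ 5 := by
  decide +kernel

/-- In every drawing of `K_{3,7}` in the plane, strictly more than `6` unordered pairs of
distinct edges cross each other. -/
theorem crossing_K37 (D : Drawing (completeBipartiteGraph (Fin 3) (Fin 7))) :
    6 < {q : Sym2 (completeBipartiteGraph (Fin 3) (Fin 7)).edgeSet |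
        ∃ e f, q = s(e, f) ∧ D.Crosses e f}.ncard := by
  classical
  choose l r hlr using exists_eq_edge37
  have hr : ∀ i j, r (edge37 i j) = j := fun i j => (edge37_inj (hlr (edge37 i j))).2.symm
  set S := {q : Sym2 (completeBipartiteGraph (Fin 3) (Fin 7)).edgeSet |
        ∃ e f, q = s(e, f) ∧ D.Crosses e f} with hS
  have hfin : S.Finite := Set.toFinite S
  rw [Set.ncard_eq_toFinset_card S hfin]
  have hex : ∀ T : Finset (Fin 7), ∃ q : Sym2 (completeBipartiteGraph (Fin 3) (Fin 7)).edgeSet,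
      T.card = 3 → q ∈ S ∧ ∃ j j', j ∈ T ∧ j' ∈ T ∧ j ≠ j' ∧ Sym2.map r q = s(j, j') := by
    intro T
    by_cases hT : T.card = 3
    · obtain ⟨i, i', j, j', hj, hj', hne, hcr⟩ := exists_crosses_of_triple D T hT
      exact ⟨s(edge37 i j, edge37 i' j'), fun _ =>
        ⟨⟨_, _, rfl, hcr⟩, j, j', hj, hj', hne, by simp [hr]⟩⟩
    · exact ⟨s(edge37 0 0, edge37 0 0), fun h => absurd h hT⟩
  choose Q hQ using hex
  have hcard : ∀ T ∈ Finset.powersetCard 3 (Finset.univ : Finset (Fin 7)), T.card = 3 :=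
    fun T hT => (Finset.mem_powersetCard.1 hT).2
  have hcount := Finset.card_le_mul_card_image_of_maps_to
    (s := Finset.powersetCard 3 (Finset.univ : Finset (Fin 7))) (t := hfin.toFinset) (f := Q)
    (fun T hT => hfin.mem_toFinset.2 (hQ T (hcard T hT)).1) 5 (by
      intro q _
      rcases Finset.eq_empty_or_nonempty
        ((Finset.powersetCard 3 (Finset.univ : Finset (Fin 7))).filter fun T => Q T = q)
        with hemp | ⟨T₀, hT₀⟩
      · rw [hemp]; simp
      obtain ⟨hT₀mem, rfl⟩ := Finset.mem_filter.1 hT₀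
      obtain ⟨-, j, j', -, -, hne, hmap⟩ := hQ T₀ (hcard T₀ hT₀mem)
      refine (Finset.card_le_card ?_).trans (card_triples_containing_le j j' hne)
      intro T hT
      obtain ⟨hT, hTq⟩ := Finset.mem_filter.1 hT
      obtain ⟨-, k, k', hk, hk', -, hmap'⟩ := hQ T (hcard T hT)
      rw [hTq, hmap] at hmap'
      refine Finset.mem_filter.2 ⟨hT, ?_⟩
      rcases Sym2.eq_iff.1 hmap' with ⟨rfl, rfl⟩ | ⟨rfl, rfl⟩
      · exact ⟨hk, hk'⟩
      · exact ⟨hk', hk⟩)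
  have h35 : (Finset.powersetCard 3 (Finset.univ : Finset (Fin 7))).card = 35 := by
    rw [Finset.card_powersetCard]
    rfl
  omega
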